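/- arXiv:math/0304410 — 2 statements merged into one kernel-verified Lean document; each statement's English description precedes it below -/
import Mathlib

section
/- There exists a 47×47 matrix with all entries equal to 1 or -1 whose determinant equals 2^46 · 11^18 · 15^4 · 60. Consequently md(47) ≥ 2^46 · 11^18 · 15^4 · 60. -/
/-- `md n` is the maximal determinant of an `n × n` matrix all of whose
entries are `1` or `-1`. -/
noncomputable def md (n : ℕ) : ℤ :=
  sSup {d : ℤ | ∃ M : Matrix (Fin n) (Fin n) ℤ,
    (∀ i j, M i j = 1 ∨ M i j = -1) ∧ M.det = d}

/-- The rows of the matrix: bit `j` of the `i`-th number says whether entry `(i, j)` is `1`. -/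
def rowBits : List ℕ := [
    39132592151991, 4152014694145, 47547478502005, 126710535130880, 10633714374284,
    75069799566999, 72133567301967, 28099009357882, 84684441037216, 140359494463487,
    41848523923673, 120766150612824, 82688571437778, 105560788231508, 46746854375462,
    58412314413709, 131951391616707, 78148037128749, 35263730340795, 31448703449429,
    86417282358961, 56040392145025, 5175350865724, 26614906618985, 138673600873868,
    91648843474106, 19937908659700, 79988018643939, 18724206238712, 130320620425838,
    102696197706007, 34649249400401, 49700117643282, 66875944199072, 65771023502302,
    78023740410072, 7057953147746, 107659599160052, 9170634079822, 22810622650006, 90851787186971,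
    50761700753178, 16982756402671, 129414313835618, 99316807305780, 115324752841785,
    58675492587123]

set_option maxHeartbeats 4000000 in
/-- The rows of a lower triangular integer matrix that brings the matrix into upper triangular
form by left multiplication (entries above the diagonal are omitted). -/
def elimRows : List (List ℤ) := [
   [1],
   [-1, 1],
   [0, -1, 1],
   [1, 0, 0, 1],
   [1, 1, -1, 0, 1],
   [-1, 0, 0, 0, 0, 1],
   [-1, -1, 1, 1, -1, 0, 1],
   [0, 0, 1, 1, 0, 0, 1, 1],
   [-2, 0, 1, -1, 0, 2, 1, 1, 2],
   [-2, 0, 1, 1, 0, 2, 1, 1, 2, 2],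
   [-2, -1, 2, 2, 0, 3, 3, 2, 4, 2, 1],
   [-2, 7, -2, -18, 0, 3, -1, -2, 4, -6, -7, 8],
   [6, 1, 2, 6, 4, -7, 1, 2, -4, 2, 3, -4, 4],
   [17, 5, 6, 19, 13, -22, 3, 8, -12, 9, 10, -15, 13, 2],
   [44, 3, 14, 53, 26, -47, 7, 10, -28, 21, 32, -22, 26, -4, 13],
   [-58, -6, -22, -67, -40, 58, -14, -14, 32, -27, -43, 26, -34, 8, -17, 6],
   [-64, -3, -26, -96, -50, 69, -17, -12, 46, -36, -59, 48, -42, 14, -16, 18, 10],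
   [-736, -537, -654, 16, -950, 511, -483, -388, -86, -124, -241, -208, -318, 266, -224, 182,
    -130, 320],
   [380, -225, 154, 188, 214, -477, 13, 260, -126, -176, -41, -4, -46, 594, 52, 278, 638, 100, 488],
   [220, -15, 166, 324, 462, -499, -77, 212, -242, 144, 153, -156, -42, 98, 276, 38, 354, -188,
    344, 292],
   [-308, 414, -442, -1685, -1721, 2192, 1182, -716, 1544, -647, -581, 1214, 740, -373, -1251,
    -289, -1596, 1154, -1844, -1745, 262],
   [-22, 90, 190, 71, -133, 76, -258, -172, -212, 266, 29, 127, -68, -359, 102, -71, -396, -260,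
    -172, -175, -364, 423],
   [-950, 1332, 4596, 3370, -675, -1016, -7654, -3170, -6884, 6256, 1232, 720, -3058, -7677, 3918,
    -1363, -6396, -7862, -940, -1029, -8420, 9204, 446],
   [36002, -9300, -49064, -158250, 49979, 79304, 260910, 21594, 174432, -193354, -120420, -22406,
    211846, 174041, -108592, 9247, 112556, 95578, 91976, -11407, 124532, -63858, 169598, 149540],
   [-74686, 23436, 140568, 389974, -100405, -203640, -616210, -43558, -427360, 466422, 290204,
    50906, -494490, -424727, 268496, -36721, -257108, -236102, -204760, 35841, -300396, 164558,
    -397218, -350940, 18848],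
   [-1262, -5503, 8816, 24513, -15875, 765, -19105, -7676, -8330, 12124, 8188, 6797, -20850,
    -16589, -4648, 93, -15176, 10626, -17700, -793, -12322, -5339, -33026, -20130, 2156, 16810],
   [134894, 181083, -555786, -741112, -710197, 1091015, 1741109, -318584, 862368, -1457088,
    -1596111, -215632, 1791508, 1113770, -1608986, 1330580, -280838, 763712, 223631, -738790,
    -371426, 353108, 1198309, 1428666, -1071734, 931098, 1016951],
   [-2717934, 1904805, -5162646, -5654440, -1440587, 4349497, 5905355, -2689032, 487392, -6370816,
    -8427153, -4205136, 7615084, 4993942, -5292390, 7554284, -2781754, -3055232, 2982833,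
    -1777530, -3234206, 6030988, 11670267, 8971462, -8457930, 3171110, 5411145, 1437472],
   [-26004786, 16169247, -67905714, -79488640, -23275865, 75351451, 109020425, -34808232,
    40140960, -108195808, -114514707, -46077312, 106058020, 87106738, -89911362, 88960724,
    -18709486, 4909408, 33951707, -26003118, -20480618, 44483668, 133114665, 111688354,
    -101266686, 55968818, 61914387, 15093712, 8338968],
   [-248907687, 217515969, -181345593, -167184703, -152329943, 203264743, 5137187, -176109735,
    25905615, -74238835, 2138118, -60269781, -163397894, -137956316, -51984867, 58991012,
    -150661654, -191307278, -118352872, 127611546, 48466726, 60237826, 128373168, -73239605,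
    -149813037, 206518136, 103745892, 7973470, 33743457, 254043081],
   [-50937, 32367169, 19604651, 18638306, 11270262, -5969205, -43160123, 15962719, -28456095,
    42437987, -12843809, -26389088, 7018908, -24563804, -7139803, 25532068, -6075014, -35575676,
    -10403129, -51665510, -85255532, 57078991, 9173739, 45760721, -33130875, -15933726, 46250527,
    -23674376, 40734485, -4905025, 60422254],
   [60937041, -113528168, -84709741, -78601816, 5394225, -24281658, 136338928, 17931343,
    140078661, -78534973, 21133504, 93082834, 14049816, 70059370, 53042063, -88167416, 57247924,
    153691300, 37911886, 186415360, 258753682, -193500395, -48415884, -147468073, 155394195, 0,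
    -163722938, 58797502, -119572939, 3199187, -194720942, 95602356],
   [-9811465, -31258509, -17698897, -26154670, 5297058, 3414099, 32528694, -17868391, 20444625,
    -33326975, -4342346, 6916277, 7171230, 27567090, -6117593, -15882406, -389522, 17667910,
    6149388, 26154670, 61005560, -38162982, 14203673, -9182563, 10097351, 0, -38283442, 25075840,
    -28294437, -13801657, -31846534, -9932386, 8984462],
   [-54793378, -128206076, -92716314, -122668872, 9462094, 29560452, 130453103, -69177802,
    78597779, -148508206, -21858148, 28855945, 15967292, 117761738, -20428693, -55321360,
    16083798, 60712166, 35433317, 122668872, 252523590, -156568104, 67042690, -31184711, 34094236,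
    0, -148200684, 89601401, -114274394, -42827076, -126057786, -38920762, 27595432, 21102169],
   [202348055, 191006802, -411262115, -608559164, -7687139, -160809000, 16618222, 109742269,
    -272494135, -123361023, -35903012, 192469002, -508285756, -91205726, 470956167, -222604628,
    93200108, -235292108, 55258456, 608559164, 408774182, 214822985, -10098578, -200780089,
    32856313, 0, -251132842, -216273116, -270614905, 273658657, -517281982, 498574868, -121509620,
    636166894, 591334332],
   [65121060, 11655308, -30357879, -53840306, -52847663, -6538453, 19293942, -54954149, -38077541,
    -12110865, 16915844, 76892885, -34895960, -2073882, 69969283, -82380004, -30017912, 9296286,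
    3110936, 53840306, 96453826, 48040494, 32795694, -58994881, 43195529, 0, -90057630, 17708550,
    -106901605, 67054659, -101403848, 14071036, -19540708, 63648002, 50907211, 82429927],
   [3571951, 668242, -3344285, -4456049, -4002229, 1524830, 1588484, -4279689, -1270359, -1377922,
    1713272, 5022868, -2526744, 605994, 4041912, -5640441, -1784513, 1486997, 99933, 3469492,
    6727833, 2325413, 2851856, -4450578, 2718599, 0, -6098118, 1163711, -6734053, 5162008,
    -6219655, 762932, -1611390, 3747942, 1946223, 6180368, 986557],
   [-3467467, -1921434, -22596795, -17043067, -14015171, 31746774, 12222628, -20231223, 16259199,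
    -14031602, 12426488, 8133584, -4721688, 14243270, -4566372, -14846939, -2483043, 18899031,
    -384153, 2365572, 19205235, -10618193, 15684696, -17541650, 3340273, 2202448, -14901818,
    5926661, -9046715, 17187308, -5750085, -6265588, -6814378, -4793734, -20830311, 23716748,
    16879943, 2202448],
   [-158133, -2810266, 1845605, 4672927, 3458921, 25583516, 23121512, -10992507, 17160411,
    -26838188, 12838112, -11420894, 16061328, 30903790, -13504018, 3090379, 5536883, 18779509,
    21632653, -12838112, -107555, -16252547, 16279964, 4561660, -5103263, 2378232, 6180758,
    12313439, 17907545, -11138518, -2388055, -23401452, 7502338, -24713546, -29936999, 1098782,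
    10543417, 2378232, 14792060],
   [-716027, -580226, -731289, -763763, -251885, 726124, -101452, -81409, 291877, -301652, 110292,
    -61010, -388076, 55250, -412318, 5525, 40885, 10115, 38675, 649880, 347039, -284925, 658720,
    292812, 83619, -388076, 11050, 405981, -10897, 211238, 291555, -66300, -11050, 413270,
    -713817, 345934, 485979, -388076, 290280, 760172],
   [880484, 721917, 846838, 922321, 275295, -758283, 207584, -122, -327559, 247234, -68864, 30670,
    495992, 38250, 461006, -34425, -66045, 66045, 7650, -846960, -400338, 331100, -708240,
    -385954, -130948, 495992, 7650, -459377, 33524, -241771, -392810, -7650, -7650, -597465,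
    749414, -334803, -495193, 495992, -320135, -915824, 38250],
   [13, 1, 17, 13, -13, -14, -13, -13, -13, 13, 13, 3, 0, 0, 17, 0, 0, 0, 0, -13, 1, 12, -13, -13,
    13, 0, 0, -13, -17, 13, -12, 0, 0, 0, 13, 1, 0, 0, -12, -17, 0, 17],
   [-20404, -28163, 3604, -13359, -10441, -7163, -32526, 3604, 13359, 32526, -624, 18956, -7910,
    -21360, 624, 7905, 3885, -3885, -16620, 18824, 11392, -13856, -14326, 624, 23216, -18200,
    -16620, -4661, -20404, 8861, 18956, 16620, 16620, 29265, 6416, -7163, -5465, -18200, -10309,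
    -624, -21360, 18824, 10290],
   [2204, 4363, -20404, 13359, -9159, 25363, 32526, -20404, 10441, -14326, 624, -756, 7910, 21360,
    -18824, -7905, -3885, 27685, -1580, -17424, 6808, -4344, 15726, -18824, -6416, 18200, -1580,
    8861, 2204, 14939, -756, -16620, -16620, -29265, -24616, 25363, 5465, 18200, -13491, 624,
    21360, -17424, -10290, 18200],
   [-2496, -2387, -1288, 2549, -2177, -527, -494, 884, -441, 2106, -1612, 324, -494, -156, -2172,
    285, 1665, 443, -1288, 124, -332, 0, -1982, 0, 1612, 1612, 884, 443, -324, 1665, 2496, -324,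
    -2496, 441, 0, -527, -2549, -560, -1665, 560, 2016, -2048, -2106, 1612, 2172],
   [-195, -2387, 1013, 2549, -2177, -527, -494, -1417, -441, 2106, 689, 2625, -494, 2145, 129,
    285, 1665, 443, 1013, -2177, -332, 0, -1982, -2301, 1612, -689, -1417, 443, -2625, 1665, 195,
    -2625, -195, 441, 0, -527, -2549, 1741, -1665, -1741, -285, 253, -2106, 1612, -129, 2301],
   [177, 221, 109, -221, 155, -109, -124, 109, -153, -162, 109, -177, -124, -165, 177, 165, -153,
    -221, 109, 155, -124, 162, 140, 177, -124, -109, 109, -221, 177, -153, -177, 177, 177, 153,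
    162, -109, 221, -109, 153, 109, -165, 155, 162, -124, -177, -177, 162]]

/-- The sign encoded by bit `j` of `m`. -/
def sgn (m j : ℕ) : ℤ := bif m.testBit j then 1 else -1

/-- Column `j` of the combination of the rows `ms` with coefficients `l`. -/
def comb : List ℤ → List ℕ → ℕ → ℤ
  | a :: as, m :: ms, j => (bif m.testBit j then a else -a) + comb as ms j
  | _, _, _ => 0

theorem comb_eq (l : List ℤ) (ms : List ℕ) (j : ℕ) :
    comb l ms j = ∑ k ∈ Finset.range ms.length, l.getD k 0 * sgn (ms.getD k 0) j := by
  induction ms generalizing l with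
  | nil => cases l <;> simp [comb]
  | cons m ms ih =>
    cases l with
    | nil => simp [comb]
    | cons a as =>
      rw [List.length_cons, Finset.sum_range_succ']
      simp only [comb, ih, List.getD_cons_succ, List.getD_cons_zero, sgn]
      cases m.testBit j <;> simp [add_comm]

/-- The matrix of large determinant. -/
def bigM : Matrix (Fin 47) (Fin 47) ℤ := fun i j => sgn (rowBits.getD i 0) j

/-- The elimination matrix. -/
def elimM : Matrix (Fin 47) (Fin 47) ℤ := fun i j => (elimRows.getD i []).getD j 0

theorem mul_entry (i j : Fin 47) :
    (elimM * bigM) i j = comb (elimRows.getD i []) rowBits j := by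
  rw [comb_eq, Matrix.mul_apply, show rowBits.length = 47 from rfl, Finset.sum_range]
  rfl

theorem elim_lower : ∀ i : Fin 47, ∀ j : Fin 47, i < j → (elimRows.getD i []).getD j 0 = 0 := by
  decide +kernel

theorem prod_upper : ∀ i : Fin 47, ∀ j : Fin 47, j < i →
    comb (elimRows.getD i []) rowBits j = 0 := by
  decide +kernel

theorem elim_diag : ∏ i : Fin 47, (elimRows.getD i []).getD i 0 ≠ 0 := by
  decide +kernel

theorem diag_eq : ∏ i : Fin 47, comb (elimRows.getD i []) rowBits i =
    (∏ i : Fin 47, (elimRows.getD i []).getD i 0) * (2^46 * 11^18 * 15^4 * 60) := by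
  decide +kernel

theorem det_elimM : elimM.det = ∏ i : Fin 47, (elimRows.getD i []).getD i 0 :=
  Matrix.det_of_isLowerTriangular elimM fun i j h => elim_lower i j h

theorem det_prod : (elimM * bigM).det =
    ∏ i : Fin 47, comb (elimRows.getD i []) rowBits i := by
  rw [Matrix.det_of_isUpperTriangular (M := elimM * bigM)
    (fun i j h => by rw [mul_entry]; exact prod_upper i j h)]
  exact Finset.prod_congr rfl fun i _ => mul_entry i i

theorem det_bigM : bigM.det = 2^46 * 11^18 * 15^4 * 60 := by
  have h := det_prod
  rw [Matrix.det_mul, det_elimM, diag_eq] at h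
  exact mul_left_cancel₀ elim_diag h

theorem bigM_entry (i j : Fin 47) : bigM i j = 1 ∨ bigM i j = -1 := by
  unfold bigM sgn
  cases (rowBits.getD i 0).testBit j <;> simp

theorem stmt_10 :
    (∃ M : Matrix (Fin 47) (Fin 47) ℤ,
      (∀ i j, M i j = 1 ∨ M i j = -1) ∧ M.det = 2^46 * 11^18 * 15^4 * 60) ∧
    (2^46 * 11^18 * 15^4 * 60 : ℤ) ≤ md 47 := by
  have hM : ∃ M : Matrix (Fin 47) (Fin 47) ℤ,
      (∀ i j, M i j = 1 ∨ M i j = -1) ∧ M.det = 2^46 * 11^18 * 15^4 * 60 :=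
    ⟨bigM, bigM_entry, det_bigM⟩
  refine ⟨hM, ?_⟩
  unfold md
  refine le_csSup ?_ hM
  refine ⟨(Nat.factorial 47 : ℕ) • (1 : ℤ) ^ 47, ?_⟩
  rintro d ⟨M, hM, rfl⟩
  have h := Matrix.det_le (A := M) (abv := AbsoluteValue.abs) (x := (1 : ℤ)) (fun i j => by
    rcases hM i j with h | h <;> simp [h])
  rw [Fintype.card_fin] at h
  exact (le_abs_self _).trans h
end

section
/- There exists a 93×93 matrix with all entries equal to 1 or -1 whose determinant equals 2^92 · 23^45 · 231. Consequently md(93) ≥ 2^92 · 23^45 · 231. -/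
/-! We exhibit a Hadamard matrix `H` of order 92 (equivalent to one of Williamson type) whose
entries sum to 832, and border it by a column of `1`s and a row of `-1`s. -/

/-- The rows of `H`, as 92-bit masks (bit set means entry `1`). -/
def hadRows : List ℕ := [
  3360051945603147946239284572, 1757972873580416560536583503, 1464282523426343071484400278,
  2919440170967203555660952282, 4094200169621606474219048380, 3227668765292573165108481166,
  3477859380025135117286813973, 1974435446958928279145199069, 3978544575731594069887597645,
  2994997701625820231682404205, 1008672559175203252925008173, 2906101454657383993585777235,
  888757387816570826359939921, 3202713660191175313041092267, 1444542306243303038897949345,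
  2878901355065147932898869941, 4175429599358599431064890722, 3369576088278925226141584690,
  1816915119773624053574061458, 1347644864234137490408452909, 2686127092286802634385174956,
  390820529905665386918884526, 810105649829722633292922538, 2414207911872828577652807604,
  4798739393934510607791552671, 4674072798211589981497992905, 4386052264477541750470580836,
  1159921104991719403653897409, 2290280887864262223449419380, 4589572558249731620436445982,
  4236510240279253244541125066, 3549574535784832031099737187, 2138378149858213530723385136,
  4266535817008618156813003159, 1379457821306066449202838311, 2182661976350800625130069574,
  615961722302477387416310916, 1203568483370354227021151999, 2436851231580607767891552776,
  4845350010908984527070921703, 203846089810206269064032198, 4553228861730408934432733061,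
  4163819951209870228706769148, 1565699681132371410589473265, 3102934163945153702637822996,
  1264290727698372802501484510, 3988468810867019143046797008, 3054702815488547363004283479,
  3823829058177722504558533799, 2685529477665979328217509561, 4562175605092041593225016698,
  4144088573889175953060805890, 3364769405923494079248444914, 3203506429345222820615910380,
  3506687780567236851826872273, 2071798679762167984467626069, 4172100318401224710245533532,
  3383469098880523169495603535, 1786710370715325864456054121, 1369368164787273385466061531,
  2241378640606200305009159615, 497357228277038231338611574, 3967266589727175821858164453,
  3012485608246764785055058492, 1062840253919559800408458126, 2097212966810067845426794730,
  4203550053180126112533280290, 3465560377117745685062302642, 2009072629760606667063271571,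
  605133387558607007791174713, 3731276035407092769431191674, 2470493115650282848974743804,
  4931826121881630307744581135, 4883540815681709557649038312, 4825690564080033874090811431,
  4709952392724367649557649337, 474644314903326645475477371, 4011594650671717812985407231,
  1871170756135865389309519351, 1219788325194965759109424102, 2483832125158130046870351812,
  4925524033734491556607162241, 62802967795894830344685323, 154073458678570809249257953,
  4673174765223078093273996235, 566333438005787974344187807, 1141829549302827897804155080,
  2639784669956476070065863065, 4613581183868871010721717051, 686575866092444688982711935,
  3569597476856102701771461879, 2178423829257711256960892440]

/-- Number of set bits among the `n` lowest ones. -/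
def popc (n : ℕ) : ℕ → ℕ :=
  Nat.rec (fun _ => 0) (fun _ ih c => Nat.add (Nat.mod c 2) (ih (Nat.div c 2))) n

/-- Boolean test that all pairs of masks differ in exactly 46 places. -/
def pairCheck (l : List ℕ) : Bool :=
  List.rec true (fun a t ih =>
    and (List.rec true (fun b _ ih2 => and (Nat.beq (popc 92 (Nat.xor a b)) 46) ih2) t) ih) l

def sgnBit (a k : ℕ) : ℤ := if a.testBit k then 1 else -1

theorem sgnBit_or (a k : ℕ) : sgnBit a k = 1 ∨ sgnBit a k = -1 := by
  unfold sgnBit; split <;> simp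

theorem sgnBit_mul (a b k : ℕ) : sgnBit a k * sgnBit b k = - sgnBit (a ^^^ b) k := by
  unfold sgnBit
  rw [Nat.testBit_xor]
  cases a.testBit k <;> cases b.testBit k <;> simp

theorem popc_succ (n c : ℕ) : popc (n+1) c = c % 2 + popc n (c / 2) := rfl

theorem sum_sgnBit (n : ℕ) : ∀ c : ℕ, ∑ k : Fin n, sgnBit c k = 2 * (popc n c : ℤ) - n := by
  induction n with
  | zero => intro c; simp [popc]
  | succ n ih =>
    intro c
    rw [Fin.sum_univ_succ, popc_succ]
    have h : ∀ k : Fin n, sgnBit c (k.succ : Fin (n+1)) = sgnBit (c / 2) k := by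
      intro k
      unfold sgnBit
      rw [Fin.val_succ, Nat.testBit_succ]
    simp only [h, ih]
    have h0 : sgnBit c ((0 : Fin (n+1)) : ℕ) = 2 * ((c % 2 : ℕ) : ℤ) - 1 := by
      unfold sgnBit
      rw [Fin.val_zero, Nat.testBit_zero]
      rcases Nat.mod_two_eq_zero_or_one c with h | h <;> simp [h]
    rw [h0]
    push_cast
    ring

theorem pairCheck_spec (l : List ℕ) (h : pairCheck l = true) :
    l.Pairwise (fun a b => popc 92 (a ^^^ b) = 46) := by
  induction l with
  | nil => exact List.Pairwise.nil
  | cons a t ih =>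
    have hb : and (List.rec true (fun b _ ih2 =>
      and (Nat.beq (popc 92 (Nat.xor a b)) 46) ih2) t : Bool) (pairCheck t) = true := h
    rw [Bool.and_eq_true] at hb
    refine List.Pairwise.cons ?_ (ih hb.2)
    have h1 := hb.1
    clear h hb ih
    induction t with
    | nil => simp
    | cons b t ih2 =>
      have h2 : and (Nat.beq (popc 92 (Nat.xor a b)) 46) (List.rec true (fun b _ ih2 =>
        and (Nat.beq (popc 92 (Nat.xor a b)) 46) ih2) t : Bool) = true := h1
      rw [Bool.and_eq_true] at h2
      intro x hx
      rcases List.mem_cons.1 hx with rfl | hx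
      · exact Nat.eq_of_beq_eq_true h2.1
      · exact ih2 h2.2 x hx

theorem hadRows_length : hadRows.length = 92 := by decide +kernel

theorem hadRows_check : pairCheck hadRows = true := by decide +kernel

theorem hadRows_sum : (hadRows.map (popc 92)).sum = 4648 := by decide +kernel

def hadRow (i : Fin 92) : ℕ := hadRows[(i : ℕ)]'(by rw [hadRows_length]; exact i.2)

def hadMat : Matrix (Fin 92) (Fin 92) ℤ := fun i j => sgnBit (hadRow i) j

theorem hadRow_pair (i j : Fin 92) (h : i ≠ j) : popc 92 (hadRow i ^^^ hadRow j) = 46 := by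
  have hp := List.pairwise_iff_getElem.1 (pairCheck_spec _ hadRows_check)
  rcases lt_or_gt_of_ne h with h | h
  · exact hp i j _ _ h
  · rw [Nat.xor_comm]
    exact hp j i _ _ h

theorem hadMat_mul : hadMat * hadMat.transpose = (92 : ℤ) • (1 : Matrix (Fin 92) (Fin 92) ℤ) := by
  ext i j
  rw [Matrix.mul_apply]
  simp only [Matrix.transpose_apply, hadMat, sgnBit_mul, Finset.sum_neg_distrib, sum_sgnBit]
  by_cases h : i = j
  · subst h
    have h0 : popc 92 0 = 0 := by decide +kernel
    simp [h0]
  · rw [hadRow_pair i j h]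
    simp [h]

theorem hadMat_sum : ∑ i, ∑ j, hadMat i j = 832 := by
  have h : ∑ i : Fin 92, popc 92 (hadRow i) = 4648 := by
    rw [← hadRows_sum, ← List.sum_ofFn]
    have hl : List.ofFn (fun i => popc 92 (hadRow i)) = hadRows.map (popc 92) := by
      apply List.ext_getElem
      · rw [List.length_ofFn, List.length_map, hadRows_length]
      · intro n h1 h2
        rw [List.getElem_ofFn, List.getElem_map]
        rfl
    rw [hl]
  simp only [hadMat, sum_sgnBit, Finset.sum_sub_distrib, ← Finset.mul_sum]
  rw [← Nat.cast_sum, h]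
  simp

def colOne : Matrix (Fin 92) (Fin 1) ℤ := fun _ _ => 1

def rowNeg : Matrix (Fin 1) (Fin 92) ℤ := fun _ _ => -1

/-- The bordered matrix. -/
def bordMat : Matrix (Fin 92 ⊕ Fin 1) (Fin 92 ⊕ Fin 1) ℤ :=
  Matrix.fromBlocks hadMat colOne rowNeg 1

theorem hadMat_det_sq : hadMat.det * hadMat.det = 92 ^ 92 := by
  have h := congrArg Matrix.det hadMat_mul
  rw [Matrix.det_mul, Matrix.det_transpose, Matrix.det_smul, Matrix.det_one, Fintype.card_fin,
    mul_one] at h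
  exact h

theorem bordMat_mul :
    bordMat * Matrix.fromBlocks hadMat.transpose
        (-(hadMat.transpose * colOne))
        0 ((92 : ℤ) • (1 : Matrix (Fin 1) (Fin 1) ℤ)) =
      Matrix.fromBlocks ((92 : ℤ) • (1 : Matrix (Fin 92) (Fin 92) ℤ)) 0
        (rowNeg * hadMat.transpose)
        ((924 : ℤ) • (1 : Matrix (Fin 1) (Fin 1) ℤ)) := by
  unfold bordMat
  rw [Matrix.fromBlocks_multiply]
  refine Matrix.fromBlocks_inj.2 ⟨?_, ?_, ?_, ?_⟩
  · rw [hadMat_mul]; simp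
  · rw [Matrix.mul_neg, ← Matrix.mul_assoc, hadMat_mul, Matrix.smul_mul, Matrix.one_mul, Matrix.mul_smul, Matrix.mul_one]
    exact neg_add_cancel _
  · simp
  · ext i j
    have hi : i = j := Subsingleton.elim _ _
    subst hi
    have h := hadMat_sum
    have e1 : (rowNeg * -(hadMat.transpose * colOne)) i i = 832 := by
      rw [← h]
      simp only [Matrix.mul_apply, Matrix.neg_apply, Matrix.transpose_apply, colOne, rowNeg,
        mul_one, neg_mul_neg, one_mul]
      exact Finset.sum_comm
    rw [Matrix.add_apply, e1, Matrix.one_mul, Matrix.smul_apply, Matrix.smul_apply,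
      Matrix.one_apply_eq]
    norm_num

theorem bordMat_det : bordMat.det * hadMat.det = 92 ^ 91 * 924 := by
  have h := congrArg Matrix.det bordMat_mul
  rw [Matrix.det_mul, Matrix.det_fromBlocks_zero₂₁, Matrix.det_fromBlocks_zero₁₂,
    Matrix.det_transpose, Matrix.det_smul, Matrix.det_smul, Matrix.det_smul] at h
  simp only [Matrix.det_one, Fintype.card_fin, mul_one, pow_one] at h
  have h92 : (92 : ℤ) ≠ 0 := by norm_num
  apply mul_right_cancel₀ h92
  rw [mul_assoc, h]
  ring

theorem bordMat_det_or : bordMat.det = 2^92 * 23^45 * 231 ∨ bordMat.det = -(2^92 * 23^45 * 231) := by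
  have h1 := hadMat_det_sq
  have h2 := bordMat_det
  have h3 : hadMat.det = 92 ^ 46 ∨ hadMat.det = -92 ^ 46 := by
    apply sq_eq_sq_iff_eq_or_eq_neg.1
    rw [sq, h1]
    norm_num
  have hp : (92 : ℤ) ^ 46 ≠ 0 := by positivity
  rcases h3 with h3 | h3
  · left
    apply mul_right_cancel₀ hp
    rw [h3] at h2
    rw [h2]; norm_num
  · right
    apply mul_right_cancel₀ hp
    rw [h3] at h2
    have h4 : bordMat.det * 92 ^ 46 = -(92 ^ 91 * 924) := by rw [← h2]; ring
    rw [h4]; norm_num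

theorem bordMat_entries (i j) : bordMat i j = 1 ∨ bordMat i j = -1 := by
  rcases i with i | i <;> rcases j with j | j
  · exact sgnBit_or _ _
  · exact Or.inl rfl
  · exact Or.inr rfl
  · left
    fin_cases i
    fin_cases j
    rfl

theorem exists_mat : ∃ M : Matrix (Fin 93) (Fin 93) ℤ,
      (∀ i j, M i j = 1 ∨ M i j = -1) ∧ M.det = 2^92 * 23^45 * 231 := by
  let M : Matrix (Fin 93) (Fin 93) ℤ :=
    Matrix.reindex (finSumFinEquiv (m := 92) (n := 1)) (finSumFinEquiv (m := 92) (n := 1)) bordMat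
  have hd : M.det = bordMat.det := Matrix.det_reindex_self _ _
  have he : ∀ i j, M i j = 1 ∨ M i j = -1 := fun i j => bordMat_entries _ _
  rcases bordMat_det_or with h | h
  · exact ⟨M, he, hd.trans h⟩
  · refine ⟨-M, ?_, ?_⟩
    · intro i j
      rcases he i j with h | h <;> simp [h]
    · rw [Matrix.det_neg, hd, h, Fintype.card_fin]
      norm_num

theorem stmt_17 :
    (∃ M : Matrix (Fin 93) (Fin 93) ℤ,
      (∀ i j, M i j = 1 ∨ M i j = -1) ∧ M.det = 2^92 * 23^45 * 231) ∧
    (2^92 * 23^45 * 231 : ℤ) ≤ md 93 := by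
  refine ⟨exists_mat, ?_⟩
  apply le_csSup
  · refine ⟨Nat.factorial 93 • (1 : ℤ) ^ 93, ?_⟩
    rintro d ⟨M, hM, rfl⟩
    have h := Matrix.det_le (A := M) (abv := AbsoluteValue.abs) (x := (1 : ℤ)) (by
      intro i j
      rcases hM i j with h | h <;> simp [h])
    rw [Fintype.card_fin] at h
    exact (le_abs_self _).trans h
  · exact exists_mat
end
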